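/- Let m be a positive integer and let p, q be natural numbers with p + q > 0. Let ω be a smooth map from ℝ^m to the space of alternating q-linear forms on ℝ^m that is positively homogeneous of degree p, i.e. ω(c·z) = c^p · ω(z) for all c > 0 and z ∈ ℝ^m. Define (δω)(z) = Σ_{α=1}^{m} e^α ∧ (∂ω/∂z^α)(z), and define (δ⁻¹η)(z) = (1/(p'+q')) · ι_z(η(z)) for η a q'-form-valued map homogeneous of degree p' with p'+q' > 0 (and δ⁻¹η = 0 when p' = q' = 0), where ι_z denotes insertion of the vector z into the first argument of an alternating form. Then δ(δ⁻¹ω) + δ⁻¹(δω) = ω. -/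

import Mathlib

/-- Raw (unbundled) representation of the values of differential forms on `ℝ^m`:
functions of an infinite sequence of vector arguments.  A `q`-form is such a
function depending only on the first `q` arguments, multilinearly and
alternatingly (this is imposed by hypotheses in the theorem below). -/
abbrev RawForm (m : ℕ) := (ℕ → (Fin m → ℝ)) → ℝ

/-- Wedge product of a 1-form `f` with a `q`-form `A` (deletion formula):
`(f ∧ A)(v₀,…,v_q) = ∑ i (-1)^i f(v_i) A(v₀,…,v̂_i,…,v_q)`. -/
def wedge1 {m : ℕ} (q : ℕ) (f : (Fin m → ℝ) → ℝ) (A : RawForm m) : RawForm m :=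
  fun v => ∑ i : Fin (q + 1),
    (-1 : ℝ) ^ (i : ℕ) * f (v (i : ℕ)) *
      A (fun n => if n < (i : ℕ) then v n else v (n + 1))

/-- The Fedosov operator `δ` acting on a `q`-form-valued map `ω` on `ℝ^m`:
`(δω)(z) = ∑ α e^α ∧ (∂ω/∂z^α)(z)`, where `e^1,…,e^m` is the dual basis of the
standard basis of `ℝ^m` and `∂ω/∂z^α` is the partial derivative of `ω` in the
direction of the `α`-th standard basis vector. -/
noncomputable def deltaOp {m : ℕ} (q : ℕ) (ω : (Fin m → ℝ) → RawForm m) :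
    (Fin m → ℝ) → RawForm m :=
  fun z => ∑ a : Fin m,
    wedge1 q (fun w => w a)
      (fun v => fderiv ℝ (fun y => ω y v) z (Pi.single a 1))

/-- Insertion `ι_z` of the vector `z` into the first argument of a
(degree-`q`) form; on `0`-forms there is no argument to insert into, and the
contraction is zero. -/
def iota {m : ℕ} (q : ℕ) (z : Fin m → ℝ) (A : RawForm m) : RawForm m :=
  if q = 0 then 0 else fun v => A (fun n => if n = 0 then z else v (n - 1))

/-- Prepend a vector to a sequence of arguments. -/
def consArg {m : ℕ} (x : Fin m → ℝ) (v : ℕ → (Fin m → ℝ)) : ℕ → (Fin m → ℝ) :=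
  fun n => if n = 0 then x else v (n - 1)

/-- Delete the `i`-th entry of a sequence of arguments. -/
def deleteArg {m : ℕ} (i : ℕ) (v : ℕ → (Fin m → ℝ)) : ℕ → (Fin m → ℝ) :=
  fun n => if n < i then v n else v (n + 1)

lemma deleteArg_zero_consArg {m : ℕ} (x : Fin m → ℝ) (v : ℕ → (Fin m → ℝ)) :
    deleteArg 0 (consArg x v) = v := by
  funext n
  simp [deleteArg, consArg]

lemma deleteArg_succ_consArg {m : ℕ} (i : ℕ) (x : Fin m → ℝ) (v : ℕ → (Fin m → ℝ)) :
    deleteArg (i + 1) (consArg x v) = consArg x (deleteArg i v) := by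
  funext n
  cases n <;> simp [deleteArg, consArg]

/-- `δω` evaluated on vectors as the alternating sum of directional derivatives. -/
lemma deltaOp_apply {m : ℕ} (q : ℕ) (ω : (Fin m → ℝ) → RawForm m) (z : Fin m → ℝ)
    (v : ℕ → (Fin m → ℝ)) :
    deltaOp q ω z v = ∑ i : Fin (q + 1),
      (-1 : ℝ) ^ (i : ℕ) * fderiv ℝ (fun y => ω y (deleteArg i v)) z (v i) := by
  simp only [deltaOp, wedge1, Finset.sum_apply]
  rw [Finset.sum_comm]
  refine Finset.sum_congr rfl fun i _ => ?_
  conv_rhs => rw [pi_eq_sum_univ' (v i), map_sum, Finset.mul_sum]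
  refine Finset.sum_congr rfl fun a _ => ?_
  rw [map_smul, smul_eq_mul, mul_assoc]
  rfl

/-- Euler's identity for positively homogeneous functions. -/
lemma fderiv_apply_self_of_homogeneous {E : Type*} [NormedAddCommGroup E] [NormedSpace ℝ E]
    {f : E → ℝ} {p : ℕ} {z : E} (hf : DifferentiableAt ℝ f z)
    (hhom : ∀ c : ℝ, 0 < c → f (c • z) = c ^ p * f z) :
    fderiv ℝ f z z = p * f z := by
  have hline : HasDerivAt (fun c : ℝ => c • z) z 1 := by
    simpa using (hasDerivAt_id (1 : ℝ)).smul_const z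
  have hcomp : HasDerivAt (fun c : ℝ => f (c • z)) (fderiv ℝ f z z) 1 := by
    have hf' : HasFDerivAt f (fderiv ℝ f z) ((1 : ℝ) • z) := by
      simpa using hf.hasFDerivAt
    exact hf'.comp_hasDerivAt (1 : ℝ) hline
  have hpow : HasDerivAt (fun c : ℝ => c ^ p * f z) (p * f z) 1 := by
    simpa using (hasDerivAt_pow p (1 : ℝ)).mul_const (f z)
  refine hcomp.unique (hpow.congr_of_eventuallyEq ?_)
  filter_upwards [lt_mem_nhds (zero_lt_one' ℝ)] with c hc using hhom c hc

/-- Expansion of an alternating form in its first argument along the standard basis. -/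
lemma eval_consArg_eq_sum {m k : ℕ} {B : RawForm m}
    (hB : ∃ A : AlternatingMap ℝ (Fin m → ℝ) ℝ (Fin (k + 1)),
      ∀ v, B v = A fun i : Fin (k + 1) => v (i : ℕ))
    (x : Fin m → ℝ) (w : ℕ → (Fin m → ℝ)) :
    B (consArg x w) = ∑ a, x a * B (consArg (Pi.single a 1) w) := by
  obtain ⟨A, hA⟩ := hB
  have hcons (y : Fin m → ℝ) : B (consArg y w) =
      A.toMultilinearMap.toLinearMap (fun i : Fin (k + 1) => consArg 0 w i) 0 y := by
    rw [hA, MultilinearMap.toLinearMap_apply]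
    refine congrArg A (funext fun i => ?_)
    cases i using Fin.cases <;> simp [consArg]
  simp only [hcons]
  conv_lhs => rw [pi_eq_sum_univ' x, map_sum]
  simp

/-- Moving the `i`-th argument of an alternating form to the front costs the sign `(-1)^i`. -/
lemma neg_one_pow_mul_eval_consArg_deleteArg {m k : ℕ} {B : RawForm m}
    (hB : ∃ A : AlternatingMap ℝ (Fin m → ℝ) ℝ (Fin (k + 1)),
      ∀ v, B v = A fun i : Fin (k + 1) => v (i : ℕ))
    (v : ℕ → (Fin m → ℝ)) (i : Fin (k + 1)) :
    (-1 : ℝ) ^ (i : ℕ) * B (consArg (v i) (deleteArg i v)) = B v := by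
  obtain ⟨A, hA⟩ := hB
  set x : Fin (k + 1) → (Fin m → ℝ) := fun j => v j with hx
  have hcons : (fun j : Fin (k + 1) => consArg (v i) (deleteArg i v) j) =
      Matrix.vecCons (x i) (i.removeNth x) := by
    funext j
    cases j using Fin.cases with
    | zero => simp [consArg, hx]
    | succ j =>
      simp only [consArg, deleteArg, Fin.val_succ, Nat.add_one_ne_zero, if_false,
        Nat.add_sub_cancel, Matrix.cons_val_succ, Fin.removeNth, Fin.succAbove, Fin.lt_def,
        Fin.val_castSucc, hx]
      split_ifs <;> rfl
  have hsign := A.map_insertNth i (x i) (i.removeNth x)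
  rw [Fin.insertNth_self_removeNth] at hsign
  rw [hA, hA, hcons, hsign]
  simp

/-- Product rule for the derivative of the contraction `y ↦ ι_y (ω y)`. -/
lemma fderiv_eval_consArg_self {m k : ℕ} {ω : (Fin m → ℝ) → RawForm m}
    (hdiff : ∀ v, Differentiable ℝ fun z => ω z v)
    (hform : ∀ z, ∃ A : AlternatingMap ℝ (Fin m → ℝ) ℝ (Fin (k + 1)),
      ∀ v, ω z v = A fun i : Fin (k + 1) => v (i : ℕ))
    (z u : Fin m → ℝ) (w : ℕ → (Fin m → ℝ)) :
    fderiv ℝ (fun y => ω y (consArg y w)) z u =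
      ω z (consArg u w) + fderiv ℝ (fun y => ω y (consArg z w)) z u := by
  have hself : HasFDerivAt (fun y => ω y (consArg y w)) (∑ a,
      (z a • fderiv ℝ (fun y => ω y (consArg (Pi.single a 1) w)) z +
        ω z (consArg (Pi.single a 1) w) • ContinuousLinearMap.proj (R := ℝ) a)) z := by
    simp only [fun y => eval_consArg_eq_sum (hform y) y w]
    exact HasFDerivAt.fun_sum fun a _ =>
      (hasFDerivAt_apply a z).mul (hdiff _ z).hasFDerivAt
  have hfixed : HasFDerivAt (fun y => ω y (consArg z w)) (∑ a,
      z a • fderiv ℝ (fun y => ω y (consArg (Pi.single a 1) w)) z) z := by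
    simp only [fun y => eval_consArg_eq_sum (hform y) z w]
    exact HasFDerivAt.fun_sum fun a _ => (hdiff _ z).hasFDerivAt.const_mul (z a)
  rw [hself.fderiv, hfixed.fderiv, eval_consArg_eq_sum (hform z) u w]
  simp [Finset.sum_add_distrib, add_comm, mul_comm]

/-- **The Fedosov homotopy identity `δ δ⁻¹ + δ⁻¹ δ = id`.**
Let `ω` be a smooth alternating-`q`-form-valued map on `ℝ^m` which is
positively homogeneous of degree `p` in `z`, with `p + q > 0`.  With
`(δ⁻¹η)(z) = (1/(p'+q')) ι_z(η(z))` on maps of symmetric degree `p'` and form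
degree `q'` (so the factor `1/(p+q)` is used both for `ω`, of bidegree
`(p, q)`, and for `δω`, of bidegree `(p-1, q+1)`), one has
`δ(δ⁻¹ω) + δ⁻¹(δω) = ω`. -/
theorem deltaOp_deltaInv_add_deltaInv_deltaOp (m p q : ℕ) (hm : 0 < m)
    (hpq : 0 < p + q)
    (ω : (Fin m → ℝ) → RawForm m)
    (hsmooth : ∀ v, ContDiff ℝ (⊤ : ℕ∞) fun z => ω z v)
    (hform : ∀ z, ∃ A : AlternatingMap ℝ (Fin m → ℝ) ℝ (Fin q),
      ∀ v, ω z v = A fun i : Fin q => v (i : ℕ))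
    (hhom : ∀ c : ℝ, 0 < c → ∀ z v, ω (c • z) v = c ^ p * ω z v) :
    ∀ z v, deltaOp (q - 1) (fun z' => (p + q : ℝ)⁻¹ • iota q z' (ω z')) z v
        + (p + q : ℝ)⁻¹ * iota (q + 1) z (deltaOp q ω z) v
      = ω z v := by
  intro z v
  have hdiff (v) : Differentiable ℝ fun z => ω z v := (hsmooth v).differentiable (by simp)
  have hpq' : (p + q : ℝ) ≠ 0 := by exact_mod_cast hpq.ne'
  have hsecond : iota (q + 1) z (deltaOp q ω z) v = p * ω z v - ∑ i : Fin q,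
      (-1 : ℝ) ^ (i : ℕ) * fderiv ℝ (fun y => ω y (consArg z (deleteArg i v))) z (v i) := by
    change deltaOp q ω z (consArg z v) = _
    rw [deltaOp_apply, Fin.sum_univ_succ]
    simp only [Fin.val_zero, Fin.val_succ, deleteArg_zero_consArg, deleteArg_succ_consArg]
    rw [← fderiv_apply_self_of_homogeneous (hdiff v z) fun c hc => hhom c hc z v]
    simp [consArg, pow_succ, sub_eq_add_neg]
  have hfirst : deltaOp (q - 1) (fun z' => (p + q : ℝ)⁻¹ • iota q z' (ω z')) z v =
      (p + q : ℝ)⁻¹ * (q * ω z v + ∑ i : Fin q, (-1 : ℝ) ^ (i : ℕ) *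
        fderiv ℝ (fun y => ω y (consArg z (deleteArg i v))) z (v i)) := by
    cases q with
    | zero => simp [deltaOp_apply, iota]
    | succ k =>
      have hterm (i : Fin (k + 1)) : fderiv ℝ (fun y => ((p + (k + 1 : ℕ) : ℝ)⁻¹ •
          iota (k + 1) y (ω y)) (deleteArg i v)) z (v i) = (p + (k + 1 : ℕ) : ℝ)⁻¹ *
          (ω z (consArg (v i) (deleteArg i v)) +
            fderiv ℝ (fun y => ω y (consArg z (deleteArg i v))) z (v i)) := by
        rw [← fderiv_eval_consArg_self hdiff hform]
        change fderiv ℝ ((p + (k + 1 : ℕ) : ℝ)⁻¹ •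
          fun y => ω y (consArg y (deleteArg i v))) z (v i) = _
        rw [fderiv_const_smul_field]
        rfl
      rw [deltaOp_apply]
      simp only [hterm, mul_left_comm _ (p + (k + 1 : ℕ) : ℝ)⁻¹, mul_add,
        Finset.sum_add_distrib, neg_one_pow_mul_eval_consArg_deleteArg (hform z),
        ← Finset.mul_sum]
      simp
  rw [hfirst, hsecond]
  field_simp
  ring
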